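/- Let A be a finite alphabet and # ∉ A a fresh letter. Define the map-copy-reverse function mcr : (A ⊎ {#})^ω ⇀ (A ⊎ {#})^ω by mcr(u₁#u₂#u₃#⋯) = u₁#ũ₁#u₂#ũ₂#u₃#ũ₃#⋯ for words containing infinitely many occurrences of # (where u₁, u₂, … ∈ A* are the maximal #-free blocks and ṽ denotes the mirror image of v), and mcr(u₁#⋯#u_n#u) = u₁#ũ₁#⋯#u_n#ũ_n#u when u ∈ A^ω contains no #. Then there exists a reversible two-way parity transducer realizing mcr. -/

import Mathlib

namespace Paper

/-! ## Two-way parity automata and transducers over infinite words.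

An infinite word over an alphabet `A` is a function `ℕ → A`.
A configuration `⊢ u p v` with `w = u v` is encoded as a pair `(p, |u|) : Q × ℕ`.
The left end-marker `⊢` is encoded as `(none : Option A)`. -/

/-- A two-way automaton (without acceptance condition): states `Q` partitioned into forward
states (`fwd`) and backward states, an initial forward state, and a transition relation `Δ`
over `Q × (A ∪ {⊢}) × Q` where transitions on the end-marker `⊢` (encoded `none`) go from
backward to forward states. -/
structure TwoWayAut (A : Type) where
  Q : Type
  finQ : Fintype Q
  fwd : Q → Prop
  init : Q
  init_fwd : fwd init
  Δ : Set (Q × Option A × Q)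
  marker : ∀ p q, (p, (none : Option A), q) ∈ Δ → ¬ fwd p ∧ fwd q

attribute [instance] TwoWayAut.finQ

variable {A B : Type}

/-- `StepVia M w c t c'` : from configuration `c`, using transition `t`, the automaton `M`
reaches the successor configuration `c'` on input word `w`. -/
def StepVia (M : TwoWayAut A) (w : ℕ → A) (c : M.Q × ℕ)
    (t : M.Q × Option A × M.Q) (c' : M.Q × ℕ) : Prop :=
  t ∈ M.Δ ∧ t.1 = c.1 ∧ t.2.2 = c'.1 ∧
    ((M.fwd c.1 ∧ t.2.1 = some (w c.2) ∧
        ((M.fwd c'.1 ∧ c'.2 = c.2 + 1) ∨ (¬ M.fwd c'.1 ∧ c'.2 = c.2))) ∨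
     (¬ M.fwd c.1 ∧ 0 < c.2 ∧ t.2.1 = some (w (c.2 - 1)) ∧
        ((M.fwd c'.1 ∧ c'.2 = c.2) ∨ (¬ M.fwd c'.1 ∧ c'.2 = c.2 - 1))) ∨
     (¬ M.fwd c.1 ∧ c.2 = 0 ∧ t.2.1 = none ∧ c'.2 = 0))

/-- The successor relation on configurations. -/
def Step (M : TwoWayAut A) (w : ℕ → A) (c c' : M.Q × ℕ) : Prop :=
  ∃ t, StepVia M w c t c'

/-- An infinite run of `M` on `w`, given by its configurations and the transitions taken. -/
def IsRun (M : TwoWayAut A) (w : ℕ → A) (cfg : ℕ → M.Q × ℕ)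
    (tr : ℕ → M.Q × Option A × M.Q) : Prop :=
  cfg 0 = (M.init, 0) ∧ ∀ i, StepVia M w (cfg i) (tr i) (cfg (i + 1))

/-- The run reads the whole word: the prefix lengths are unbounded. -/
def ReadsWhole (M : TwoWayAut A) (cfg : ℕ → M.Q × ℕ) : Prop :=
  ∀ n : ℕ, ∃ i, n ≤ (cfg i).2

/-- `t` occurs infinitely often in the sequence `tr`. -/
def InfOften {T : Type} (tr : ℕ → T) (t : T) : Prop :=
  ∀ n, ∃ i, n ≤ i ∧ tr i = t

def Deterministic (M : TwoWayAut A) : Prop :=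
  ∀ p a q q', (p, a, q) ∈ M.Δ → (p, a, q') ∈ M.Δ → q = q'

def Codeterministic (M : TwoWayAut A) : Prop :=
  ∀ p p' a q, (p, a, q) ∈ M.Δ → (p', a, q) ∈ M.Δ → p = p'

def Reversible (M : TwoWayAut A) : Prop :=
  Deterministic M ∧ Codeterministic M

def Oneway (M : TwoWayAut A) : Prop := ∀ q, M.fwd q

/-- A two-way parity automaton: a two-way automaton together with a finite family of
coloring functions (indexed by `CIdx`). -/
structure ParityAut (A : Type) extends TwoWayAut A where
  CIdx : Type
  finC : Fintype CIdx
  color : CIdx → (Q × Option A × Q) → ℕ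

attribute [instance] ParityAut.finC

/-- The parity acceptance condition: for every coloring function, the minimal color of the
transitions taken infinitely often is even. -/
def ParityCond (M : ParityAut A) (tr : ℕ → M.Q × Option A × M.Q) : Prop :=
  ∀ c : M.CIdx, Even (sInf {m : ℕ | ∃ t, InfOften tr t ∧ M.color c t = m})

/-- Acceptance of an infinite word by a two-way parity automaton. -/
def ParityAut.Accepts (M : ParityAut A) (w : ℕ → A) : Prop :=
  ∃ cfg tr, IsRun M.toTwoWayAut w cfg tr ∧ ReadsWhole M.toTwoWayAut cfg ∧ ParityCond M tr

/-- All colors of `M` (on its transitions) belong to `{0, …, ℓ-1}`. -/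
def ColorsLt (M : ParityAut A) (ℓ : ℕ) : Prop :=
  ∀ (c : M.CIdx) t, t ∈ M.Δ → M.color c t < ℓ

/-- `l` is a prefix of the infinite word `x`. -/
def IsPrefixOf {C : Type} (l : List C) (x : ℕ → C) : Prop :=
  ∀ (i : ℕ) (h : i < l.length), l.get ⟨i, h⟩ = x i

/-- Concatenation of the first `n` words of a sequence of finite words. -/
def prefixCat {C : Type} (f : ℕ → List C) : ℕ → List C
  | 0 => []
  | n + 1 => prefixCat f n ++ f n

/-- The concatenation of the sequence of finite words `f` is the infinite word `x`. -/
def FlattenTo {C : Type} (f : ℕ → List C) (x : ℕ → C) : Prop :=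
  (∀ n, IsPrefixOf (prefixCat f n) x) ∧ ∀ m, ∃ n, m ≤ (prefixCat f n).length

/-- A two-way parity transducer: a two-way parity automaton (whose underlying automaton is
required to be deterministic via hypotheses) together with an output function. -/
structure TwoWayTrans (A B : Type) extends ParityAut A where
  out : (Q × Option A × Q) → List B

/-- `T.Realizes w x` : the word `w` is accepted by (the deterministic transducer) `T`,
the produced output is infinite and equals `x`.  This is the graph of the partial function
`⟦T⟧ : A^ω ⇀ B^ω`. -/
def TwoWayTrans.Realizes (T : TwoWayTrans A B) (w : ℕ → A) (x : ℕ → B) : Prop :=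
  ∃ cfg tr, IsRun T.toTwoWayAut w cfg tr ∧ ReadsWhole T.toTwoWayAut cfg ∧
    ParityCond T.toParityAut tr ∧ FlattenTo (fun i => T.out (tr i)) x

/-- A two-way Büchi transducer: accepting transitions `acc` instead of coloring functions. -/
structure BuchiTrans (A B : Type) extends TwoWayAut A where
  acc : Set (Q × Option A × Q)
  out : (Q × Option A × Q) → List B

def BuchiTrans.Realizes (T : BuchiTrans A B) (w : ℕ → A) (x : ℕ → B) : Prop :=
  ∃ cfg tr, IsRun T.toTwoWayAut w cfg tr ∧ ReadsWhole T.toTwoWayAut cfg ∧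
    (∀ n, ∃ i, n ≤ i ∧ tr i ∈ T.acc) ∧ FlattenTo (fun i => T.out (tr i)) x

/-- A two-way transducer with no acceptance condition. -/
structure NoAccTrans (A B : Type) extends TwoWayAut A where
  out : (Q × Option A × Q) → List B

def NoAccTrans.Realizes (T : NoAccTrans A B) (w : ℕ → A) (x : ℕ → B) : Prop :=
  ∃ cfg tr, IsRun T.toTwoWayAut w cfg tr ∧ ReadsWhole T.toTwoWayAut cfg ∧
    FlattenTo (fun i => T.out (tr i)) x

/-! ## One-way parity automata, transducers, and copyless parity streaming string
transducers.  A one-way automaton has only forward states and never reads the end-marker,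
so we use a simplified (equivalent) presentation. -/

structure OnewayAut (A : Type) where
  Q : Type
  finQ : Fintype Q
  init : Q
  Δ : Set (Q × A × Q)
  CIdx : Type
  finC : Fintype CIdx
  color : CIdx → (Q × A × Q) → ℕ

attribute [instance] OnewayAut.finQ
attribute [instance] OnewayAut.finC

def OnewayDet (M : OnewayAut A) : Prop :=
  ∀ p a q q', (p, a, q) ∈ M.Δ → (p, a, q') ∈ M.Δ → q = q'

def OnewayRun (M : OnewayAut A) (w : ℕ → A) (s : ℕ → M.Q) : Prop :=
  s 0 = M.init ∧ ∀ i, (s i, w i, s (i + 1)) ∈ M.Δ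

def OnewayParityCond (M : OnewayAut A) (tr : ℕ → M.Q × A × M.Q) : Prop :=
  ∀ c : M.CIdx, Even (sInf {m : ℕ | ∃ t, InfOften tr t ∧ M.color c t = m})

def OnewayAut.Accepts (M : OnewayAut A) (w : ℕ → A) : Prop :=
  ∃ s, OnewayRun M w s ∧ OnewayParityCond M (fun i => (s i, w i, s (i + 1)))

def OnewayColorsLt (M : OnewayAut A) (ℓ : ℕ) : Prop :=
  ∀ (c : M.CIdx) t, t ∈ M.Δ → M.color c t < ℓ

/-- A one-way (deterministic) parity transducer. -/
structure OnewayTrans (A B : Type) extends OnewayAut A where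
  out : (Q × A × Q) → List B

def OnewayTrans.Realizes (T : OnewayTrans A B) (w : ℕ → A) (x : ℕ → B) : Prop :=
  ∃ s, OnewayRun T.toOnewayAut w s ∧
    OnewayParityCond T.toOnewayAut (fun i => (s i, w i, s (i + 1))) ∧
    FlattenTo (fun i => T.out (s i, w i, s (i + 1))) x

/-- Number of occurrences of `a` in the list `l` (classically). -/
noncomputable def occ {C : Type} (a : C) (l : List C) : ℕ :=
  l.countP fun x => @decide (x = a) (Classical.propDecidable _)

/-- A substitution `σ : R → (R ⊎ B)*` is copyless if every register occurs at most once in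
the concatenation of all the `σ r'`. -/
def Copyless {R C : Type} [Fintype R] (σ : R → List (R ⊕ C)) : Prop :=
  ∀ r : R, (∑ r' : R, occ (Sum.inl r) (σ r')) ≤ 1

/-- Applying an assignment `ν : R → B*` (extended to a morphism `(R ⊎ B)* → B*`). -/
def subApply {R C : Type} (ν : R → List C) : List (R ⊕ C) → List C
  | [] => []
  | Sum.inl r :: l => ν r ++ subApply ν l
  | Sum.inr b :: l => b :: subApply ν l

/-- A copyless parity streaming string transducer: a (deterministic) one-way parity
automaton with a finite set `R` of registers, a distinguished output register, and copyless
register updates, where the update of `outReg` always starts with `outReg`. -/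
structure CPSST (A B : Type) extends OnewayAut A where
  R : Type
  finR : Fintype R
  outReg : R
  upd : (Q × A × Q) → R → List (R ⊕ B)
  copyless : ∀ t, @Copyless R B finR (upd t)
  out_form : ∀ t, ∃ γ, upd t outReg = Sum.inl outReg :: γ

attribute [instance] CPSST.finR

/-- The register contents along a run: `ν_0 r = ε` and `ν_{i+1} = ν_i ∘ λ(t_i)`. -/
def regVal (T : CPSST A B) (w : ℕ → A) (s : ℕ → T.Q) : ℕ → T.R → List B
  | 0 => fun _ => []
  | i + 1 => fun r => subApply (regVal T w s i) (T.upd (s i, w i, s (i + 1)) r)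

/-- `T.Realizes w x` : the (deterministic) CPSST `T` has an accepting run on `w` whose
output-register contents are unbounded with limit `x`. -/
def CPSST.Realizes (T : CPSST A B) (w : ℕ → A) (x : ℕ → B) : Prop :=
  ∃ s, OnewayRun T.toOnewayAut w s ∧
    OnewayParityCond T.toOnewayAut (fun i => (s i, w i, s (i + 1))) ∧
    (∀ i, IsPrefixOf (regVal T w s i T.outReg) x) ∧
    (∀ m, ∃ i, m ≤ (regVal T w s i T.outReg).length)

/-- The one-way parity transducer with the same underlying automaton as the CPSST `T`,
which outputs on each transition the (copyless) substitution that `T` applies. -/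
def enrich (T : CPSST A B) :
    OnewayTrans A {σ : T.R → List (T.R ⊕ B) // Copyless σ} where
  toOnewayAut := T.toOnewayAut
  out := fun t => [⟨T.upd t, T.copyless t⟩]

/-! ## Merging forests -/

/-- A merging forest on `(Q⁺ ⊎ Q⁻, χ, ℓ)`: a finite rooted forest (given by a `parent` map
with no cycles) whose leaves (childless nodes) are injectively labeled in `Q⁻` and carry a
`χ`-tuple of integers `< ℓ`, whose roots are injectively labeled in `Q⁺`, and in which every
unary node (exactly one child) is a root. -/
structure MForest (Qp Qm χ : Type) (ℓ : ℕ) where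
  V : Type
  finV : Fintype V
  parent : V → Option V
  acyc : ∀ v : V, ¬ Relation.TransGen (fun a b => parent a = some b) v v
  leafLab : V → Qm
  rootLab : V → Qp
  tup : V → χ → ℕ
  tup_lt : ∀ v, (∀ u, parent u ≠ some v) → ∀ c, tup v c < ℓ
  leaf_inj : ∀ u v, (∀ u', parent u' ≠ some u) → (∀ v', parent v' ≠ some v) →
    leafLab u = leafLab v → u = v
  root_inj : ∀ u v, parent u = none → parent v = none → rootLab u = rootLab v → u = v
  unary_root : ∀ v : V, (∃! u, parent u = some v) → parent v = none

attribute [instance] MForest.finV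

/-- Isomorphism of merging forests: a bijection of the nodes commuting with `parent` and
preserving the leaf labels, the leaf tuples and the root labels. -/
def MFIso {Qp Qm χ : Type} {ℓ : ℕ} (F G : MForest Qp Qm χ ℓ) : Prop :=
  ∃ e : F.V ≃ G.V,
    (∀ v, G.parent (e v) = Option.map e (F.parent v)) ∧
    (∀ v, (∀ u, F.parent u ≠ some v) →
      F.leafLab v = G.leafLab (e v) ∧ ∀ c, F.tup v c = G.tup (e v) c) ∧
    (∀ v, F.parent v = none → F.rootLab v = G.rootLab (e v))

end Paper

namespace Paper

/-- A block `u ∈ A*` followed by the separator `#` (encoded as `none`). -/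
def hashWord {A : Type} (u : List A) : List (Option A) := u.map some ++ [none]

/-- `u # ũ #` where `ũ` is the mirror image of `u`. -/
def mirrorPair {A : Type} (u : List A) : List (Option A) :=
  hashWord u ++ hashWord u.reverse

/-- The infinite word `w` is the finite word `p` followed by the infinite word `t`. -/
def AppendTo {C : Type} (p : List C) (t : ℕ → C) (w : ℕ → C) : Prop :=
  (∀ (i : ℕ) (h : i < p.length), p.get ⟨i, h⟩ = w i) ∧ ∀ i, w (p.length + i) = t i

/-- The graph of the map-copy-reverse function `mcr : (A ⊎ {#})^ω ⇀ (A ⊎ {#})^ω`, with `#`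
encoded as `none`: for `w = u₁#u₂#⋯` with infinitely many `#`,
`mcr w = u₁#ũ₁#u₂#ũ₂#⋯`; and for `w = u₁#⋯#u_n#u` with `u ∈ A^ω` (no further `#`),
`mcr w = u₁#ũ₁#⋯#u_n#ũ_n#u`. -/
def MCR {A : Type} (w x : ℕ → Option A) : Prop :=
  (∃ u : ℕ → List A,
      FlattenTo (fun n => hashWord (u n)) w ∧
      FlattenTo (fun n => mirrorPair (u n)) x) ∨
  (∃ (us : List (List A)) (v : ℕ → A),
      AppendTo (us.foldr (fun b acc => hashWord b ++ acc) []) (fun i => some (v i)) w ∧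
      AppendTo (us.foldr (fun b acc => mirrorPair b ++ acc) []) (fun i => some (v i)) x)

/-!
The transducer copies a block up to its `#`, turns around and emits the block backwards, turns
around again at the previous `#` (or at `⊢`), and silently skips the block to resume after its `#`.
Letters of `A` never change the state, `#` permutes the three states cyclically and `⊢` is read in a
single state, hence reversibility. A deterministic transducer realizes a partial function, and every
word lies in the domain of `mcr`; so it is enough to show that the transducer produces `mcr w`
from `w`.
-/

section InfiniteWords

variable {C : Type}

/-- The finite word `l` is a factor of the infinite word `w` at position `p`. -/
def OccursAt (w : ℕ → C) (p : ℕ) (l : List C) : Prop :=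
  ∀ (i : ℕ) (h : i < l.length), l[i] = w (p + i)

theorem isPrefixOf_iff_occursAt_zero {w : ℕ → C} {l : List C} :
    IsPrefixOf l w ↔ OccursAt w 0 l := by
  simp [IsPrefixOf, OccursAt]

theorem occursAt_nil (w : ℕ → C) (p : ℕ) : OccursAt w p [] :=
  fun _ h => absurd h (Nat.not_lt_zero _)

theorem occursAt_append {w : ℕ → C} {p : ℕ} {l l' : List C} :
    OccursAt w p (l ++ l') ↔ OccursAt w p l ∧ OccursAt w (p + l.length) l' := by
  refine ⟨fun h => ⟨fun i hi => ?_, fun i hi => ?_⟩, fun ⟨h, h'⟩ i hi => ?_⟩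
  · rw [← h i (by grind), List.getElem_append_left hi]
  · rw [add_assoc, ← h (l.length + i) (by grind), List.getElem_append_right' l hi]
    simp only [add_comm]
  · by_cases hil : i < l.length
    · rw [List.getElem_append_left hil, h i hil]
    · rw [List.getElem_append_right (by omega), h']
      congr 1
      omega

theorem occursAt_singleton {w : ℕ → C} {p : ℕ} {a : C} : OccursAt w p [a] ↔ w p = a := by
  simp [OccursAt, eq_comm]

theorem occursAt_cons {w : ℕ → C} {p : ℕ} {a : C} {l : List C} :
    OccursAt w p (a :: l) ↔ w p = a ∧ OccursAt w (p + 1) l := by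
  rw [← List.singleton_append, occursAt_append, occursAt_singleton, List.length_singleton]

theorem occursAt_map_range (w : ℕ → C) (p n : ℕ) :
    OccursAt w p ((List.range n).map fun i => w (p + i)) := by
  intro i hi
  simp

theorem IsPrefixOf.of_prefix {l l' : List C} {x : ℕ → C} (h : IsPrefixOf l' x) (hl : l <+: l') :
    IsPrefixOf l x := by
  intro i hi
  rw [← h i (hi.trans_le hl.length_le)]
  exact hl.getElem hi

theorem prefixCat_comp_eq_flatMap {D : Type} (f : D → List C) (u : ℕ → D) (n : ℕ) :
    prefixCat (fun i => f (u i)) n = ((List.range n).map u).flatMap f := by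
  induction n with
  | zero => rfl
  | succ n ih => simp [prefixCat, ih, List.range_succ]

theorem prefixCat_prefix (f : ℕ → List C) {m n : ℕ} (h : m ≤ n) :
    prefixCat f m <+: prefixCat f n := by
  induction n, h using Nat.le_induction with
  | base => exact List.prefix_rfl
  | succ n _ ih => exact ih.trans (List.prefix_append _ _)

theorem le_length_prefixCat {f : ℕ → List C} (hf : ∀ n, f n ≠ []) (n : ℕ) :
    n ≤ (prefixCat f n).length := by
  induction n with
  | zero => exact Nat.zero_le _
  | succ n ih =>
    rw [prefixCat, List.length_append]
    exact add_le_add ih (List.length_pos_iff.2 (hf n))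

theorem exists_flattenTo {f : ℕ → List C} (hf : ∀ n, f n ≠ []) : ∃ x, FlattenTo f x := by
  have hlen := le_length_prefixCat hf
  refine ⟨fun i => (prefixCat f (i + 1))[i]'(hlen (i + 1)), fun n i hi => ?_, fun m => ⟨m, hlen m⟩⟩
  rcases le_total n (i + 1) with h | h
  · exact (prefixCat_prefix f h).getElem hi
  · exact ((prefixCat_prefix f h).getElem (hlen (i + 1))).symm

theorem FlattenTo.unique {f : ℕ → List C} {x y : ℕ → C} (hx : FlattenTo f x)
    (hy : FlattenTo f y) : x = y := by
  funext i
  obtain ⟨n, hn⟩ := hx.2 (i + 1)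
  rw [← hx.1 n i hn, ← hy.1 n i hn]

theorem exists_appendTo (l : List C) (t : ℕ → C) : ∃ x, AppendTo l t x :=
  ⟨fun i => if h : i < l.length then l[i] else t (i - l.length),
    fun i hi => by simp [hi], fun i => by simp⟩

theorem exists_seq_of_forall_list_exists {P : List C → Prop} (h_nil : P [])
    (h_snoc : ∀ l, P l → ∃ a, P (l ++ [a])) : ∃ f : ℕ → C, ∀ n, P ((List.range n).map f) := by
  have : Nonempty C := (h_snoc [] h_nil).nonempty
  choose! next h_next using h_snoc
  let L : ℕ → List C := Nat.rec [] fun _ l => l ++ [next l]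
  have hL : ∀ n, P (L n) := by
    intro n
    induction n with
    | zero => exact h_nil
    | succ n ih => exact h_next (L n) ih
  have h_map : ∀ n, (List.range n).map (fun i => next (L i)) = L n := by
    intro n
    induction n with
    | zero => rfl
    | succ n ih => rw [List.range_succ, List.map_append, ih]; rfl
  exact ⟨fun n => next (L n), fun n => (h_map n).symm ▸ hL n⟩

end InfiniteWords

section FiniteRuns

variable {A B : Type}

namespace StepVia

variable {M : TwoWayAut A} {w : ℕ → A} {c d d' : M.Q × ℕ} {t t' : M.Q × Option A × M.Q}

theorem unique (hM : Deterministic M) (h : StepVia M w c t d) (h' : StepVia M w c t' d') :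
    t = t' ∧ d = d' := by
  obtain ⟨p, a, q⟩ := t
  obtain ⟨p', a', q'⟩ := t'
  obtain ⟨_, i⟩ := d
  obtain ⟨_, i'⟩ := d'
  obtain ⟨hΔ, rfl, rfl, hmove⟩ := h
  obtain ⟨hΔ', rfl, rfl, hmove'⟩ := h'
  have h_read : a = a' := by grind
  subst h_read
  obtain rfl : q = q' := hM _ _ _ _ hΔ hΔ'
  grind

theorem snd_le (h : StepVia M w c t d) : d.2 ≤ c.2 + 1 := by
  obtain ⟨-, -, -, hmove⟩ := h
  omega

end StepVia

namespace TwoWayTrans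

variable {T : TwoWayTrans A B} {w : ℕ → A}

/-- `T.ReachesIn w c n l d`: on input `w`, some sequence of `n` transitions leads `T` from `c` to
`d` and outputs `l`. -/
inductive ReachesIn (T : TwoWayTrans A B) (w : ℕ → A) (c : T.Q × ℕ) :
    ℕ → List B → T.Q × ℕ → Prop
  | refl : ReachesIn T w c 0 [] c
  | tail {n l d t e} : ReachesIn T w c n l d → StepVia T.toTwoWayAut w d t e →
      ReachesIn T w c (n + 1) (l ++ T.out t) e

namespace ReachesIn

variable {c d d' e : T.Q × ℕ} {m n : ℕ} {l l' : List B}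

theorem trans (h : T.ReachesIn w c m l d) (h' : T.ReachesIn w d n l' e) :
    T.ReachesIn w c (m + n) (l ++ l') e := by
  induction h' with
  | refl => simpa using h
  | tail _ hstep ih => rw [← add_assoc, ← List.append_assoc]; exact ih.tail hstep

theorem unique (hT : Deterministic T.toTwoWayAut) (h : T.ReachesIn w c n l d)
    (h' : T.ReachesIn w c n l' d') : l = l' ∧ d = d' := by
  induction h generalizing l' d' with
  | refl => cases h'; exact ⟨rfl, rfl⟩
  | tail _ hstep ih =>
    obtain _ | ⟨hreach', hstep'⟩ := h'
    obtain ⟨rfl, rfl⟩ := ih hreach'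
    obtain ⟨rfl, rfl⟩ := hstep.unique hT hstep'
    exact ⟨rfl, rfl⟩

theorem snd_le (h : T.ReachesIn w c n l d) : d.2 ≤ c.2 + n := by
  induction h with
  | refl => exact le_rfl
  | tail _ hstep ih => have := hstep.snd_le; omega

theorem exists_stepVia (h : T.ReachesIn w c (n + 1) l e) :
    ∃ l' d t, T.ReachesIn w c n l' d ∧ StepVia T.toTwoWayAut w d t e := by
  obtain _ | ⟨hreach, hstep⟩ := h
  exact ⟨_, _, _, hreach, hstep⟩

theorem exists_of_le (h : T.ReachesIn w c n l d) (hmn : m ≤ n) :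
    ∃ l' d', T.ReachesIn w c m l' d' := by
  induction h with
  | refl => obtain rfl := Nat.le_zero.1 hmn; exact ⟨_, _, .refl⟩
  | tail hreach hstep ih =>
    rcases Nat.le_succ_iff.1 hmn with hle | rfl
    · exact ih hle
    · exact ⟨_, _, hreach.tail hstep⟩

end ReachesIn

theorem reachesIn_of_isRun {cfg : ℕ → T.Q × ℕ} {tr : ℕ → T.Q × Option A × T.Q}
    (h : IsRun T.toTwoWayAut w cfg tr) (n : ℕ) :
    T.ReachesIn w (T.init, 0) n (prefixCat (fun i => T.out (tr i)) n) (cfg n) := by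
  induction n with
  | zero => rw [h.1]; exact .refl
  | succ n ih => exact ih.tail (h.2 n)

theorem exists_isRun_of_forall_reachesIn (hT : Deterministic T.toTwoWayAut)
    (h : ∀ n, ∃ l d, T.ReachesIn w (T.init, 0) n l d) :
    ∃ cfg tr, IsRun T.toTwoWayAut w cfg tr := by
  choose l cfg hcfg using h
  have h_step : ∀ n, ∃ t, StepVia T.toTwoWayAut w (cfg n) t (cfg (n + 1)) := by
    intro n
    obtain ⟨_, _, t, hreach, hstep⟩ := (hcfg (n + 1)).exists_stepVia
    obtain rfl := ((hcfg n).unique hT hreach).2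
    exact ⟨t, hstep⟩
  choose tr htr using h_step
  exact ⟨cfg, tr, ((hcfg 0).unique hT .refl).2, htr⟩

theorem Realizes.unique (hT : Deterministic T.toTwoWayAut) {x y : ℕ → B} (hx : T.Realizes w x)
    (hy : T.Realizes w y) : x = y := by
  obtain ⟨cfg, tr, hrun, -, -, hx⟩ := hx
  obtain ⟨cfg', tr', hrun', -, -, hy⟩ := hy
  have h_tr : tr = tr' := by
    funext n
    have h_cfg := ((reachesIn_of_isRun hrun n).unique hT (reachesIn_of_isRun hrun' n)).2
    have h_step := hrun'.2 n
    rw [← h_cfg] at h_step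
    exact ((hrun.2 n).unique hT h_step).1
  subst h_tr
  exact hx.unique hy

/-- On input `w`, some finite sequence of transitions leads `T` from `c` to `d` and outputs `l`. -/
def Reaches (T : TwoWayTrans A B) (w : ℕ → A) (c : T.Q × ℕ) (l : List B) (d : T.Q × ℕ) : Prop :=
  ∃ n, T.ReachesIn w c n l d

namespace Reaches

variable {c d e : T.Q × ℕ} {l l' : List B}

theorem refl (c : T.Q × ℕ) : T.Reaches w c [] c := ⟨0, .refl⟩

theorem of_stepVia {t : T.Q × Option A × T.Q} (h : StepVia T.toTwoWayAut w c t d) :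
    T.Reaches w c (T.out t) d :=
  ⟨1, ReachesIn.refl.tail h⟩

theorem trans (h : T.Reaches w c l d) (h' : T.Reaches w d l' e) : T.Reaches w c (l ++ l') e :=
  let ⟨_, hm⟩ := h
  let ⟨_, hn⟩ := h'
  ⟨_, hm.trans hn⟩

theorem sweep_right {q : T.Q} {g : A → List B} {u : List A}
    (h : ∀ a ∈ u, ∀ p, w p = a → T.Reaches w (q, p) (g a) (q, p + 1)) {p : ℕ}
    (hu : OccursAt w p u) : T.Reaches w (q, p) (u.flatMap g) (q, p + u.length) := by
  induction u generalizing p with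
  | nil => exact .refl _
  | cons a u ih =>
    rw [occursAt_cons] at hu
    rw [List.flatMap_cons, List.length_cons, ← add_assoc, add_right_comm]
    exact (h a List.mem_cons_self p hu.1).trans
      (ih (fun b hb => h b (List.mem_cons_of_mem a hb)) hu.2)

theorem sweep_left {q : T.Q} {g : A → List B} {u : List A}
    (h : ∀ a ∈ u, ∀ p, w p = a → T.Reaches w (q, p + 1) (g a) (q, p)) {p : ℕ}
    (hu : OccursAt w p u) : T.Reaches w (q, p + u.length) (u.reverse.flatMap g) (q, p) := by
  induction u generalizing p with
  | nil => exact .refl _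
  | cons a u ih =>
    rw [occursAt_cons] at hu
    rw [List.reverse_cons, List.flatMap_append, List.flatMap_singleton, List.length_cons,
      ← add_assoc, add_right_comm]
    exact (ih (fun b hb => h b (List.mem_cons_of_mem a hb)) hu.2).trans
      (h a List.mem_cons_self p hu.1)

end Reaches

theorem realizes_of_forall_reaches [IsEmpty T.CIdx] (hT : Deterministic T.toTwoWayAut)
    {x : ℕ → B} (h : ∀ m, ∃ l d, T.Reaches w (T.init, 0) l d ∧
      m ≤ d.2 ∧ m ≤ l.length ∧ IsPrefixOf l x) : T.Realizes w x := by
  -- The head moves by at most one position per transition, so a run reaching `m` has length `≥ m`.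
  have h_long : ∀ m, ∃ n l d, T.ReachesIn w (T.init, 0) n l d ∧
      m ≤ n ∧ m ≤ d.2 ∧ m ≤ l.length ∧ IsPrefixOf l x := by
    intro m
    obtain ⟨l, d, ⟨n, hreach⟩, hd, hl, hlx⟩ := h m
    exact ⟨n, l, d, hreach, hd.trans (by simpa using hreach.snd_le), hd, hl, hlx⟩
  obtain ⟨cfg, tr, hrun⟩ := exists_isRun_of_forall_reachesIn hT fun m =>
    let ⟨_, _, _, hreach, hmn, _⟩ := h_long m
    hreach.exists_of_le hmn
  have h_run : ∀ m, ∃ n, m ≤ n ∧ m ≤ (cfg n).2 ∧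
      m ≤ (prefixCat (fun i => T.out (tr i)) n).length ∧
      IsPrefixOf (prefixCat (fun i => T.out (tr i)) n) x := by
    intro m
    obtain ⟨n, l, d, hreach, h_props⟩ := h_long m
    obtain ⟨rfl, rfl⟩ := hreach.unique hT (reachesIn_of_isRun hrun n)
    exact ⟨n, h_props⟩
  refine ⟨cfg, tr, hrun, fun m => ?_, isEmptyElim, fun m => ?_, fun m => ?_⟩ <;>
    obtain ⟨n, hmn, h_pos, h_len, h_pre⟩ := h_run m
  · exact ⟨n, h_pos⟩
  · exact h_pre.of_prefix (prefixCat_prefix _ hmn)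
  · exact ⟨n, h_len⟩

end TwoWayTrans

end FiniteRuns

section BlockDecomposition

variable {A : Type}

theorem hashWord_ne_nil (u : List A) : hashWord u ≠ [] := by simp [hashWord]

theorem mirrorPair_ne_nil (u : List A) : mirrorPair u ≠ [] := by simp [mirrorPair, hashWord]

theorem length_hashWord (u : List A) : (hashWord u).length = u.length + 1 := by simp [hashWord]

theorem occursAt_hashWord {w : ℕ → Option A} {p : ℕ} {u : List A} :
    OccursAt w p (hashWord u) ↔ OccursAt w p (u.map some) ∧ w (p + u.length) = none := by
  rw [hashWord, occursAt_append, occursAt_singleton, List.length_map]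

theorem exists_occursAt_hashWord {w : ℕ → Option A} {p d : ℕ} (h : w (p + d) = none) :
    ∃ u : List A, OccursAt w p (hashWord u) := by
  induction d generalizing p with
  | zero => exact ⟨[], occursAt_singleton.2 h⟩
  | succ d ih =>
    cases hp : w p with
    | none => exact ⟨[], occursAt_singleton.2 hp⟩
    | some a =>
      obtain ⟨u, hu⟩ := ih (p := p + 1) (by rwa [add_right_comm])
      exact ⟨a :: u, occursAt_cons.2 ⟨hp, hu⟩⟩

theorem exists_map_some_of_forall_not_occursAt_hashWord {w : ℕ → Option A} {p : ℕ}
    (h : ∀ u : List A, ¬ OccursAt w p (hashWord u)) : ∃ v : ℕ → A, ∀ i, w (p + i) = some (v i) := by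
  choose v hv using fun i => Option.ne_none_iff_exists'.1 fun hi : w (p + i) = none =>
    let ⟨u, hu⟩ := exists_occursAt_hashWord hi
    h u hu
  exact ⟨v, hv⟩

theorem flattenTo_hashWord_or_appendTo (w : ℕ → Option A) :
    (∃ u : ℕ → List A, FlattenTo (fun n => hashWord (u n)) w) ∨
      ∃ (us : List (List A)) (v : ℕ → A),
        AppendTo (us.flatMap hashWord) (fun i => some (v i)) w := by
  by_cases h : ∀ us : List (List A), OccursAt w 0 (us.flatMap hashWord) →
      ∃ u, OccursAt w 0 ((us ++ [u]).flatMap hashWord)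
  · left
    obtain ⟨u, hu⟩ := exists_seq_of_forall_list_exists
      (P := fun us => OccursAt w 0 (us.flatMap hashWord)) (occursAt_nil w 0) h
    refine ⟨u, fun n => ?_, fun m => ⟨m, le_length_prefixCat (fun n => hashWord_ne_nil _) m⟩⟩
    rw [isPrefixOf_iff_occursAt_zero, prefixCat_comp_eq_flatMap]
    exact hu n
  · right
    push Not at h
    obtain ⟨us, hus, h_last⟩ := h
    obtain ⟨v, hv⟩ := exists_map_some_of_forall_not_occursAt_hashWord fun u hu =>
      h_last u (by simpa [occursAt_append] using ⟨hus, hu⟩)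
    exact ⟨us, v, isPrefixOf_iff_occursAt_zero.2 hus, by simpa using hv⟩

theorem mcr_iff {w x : ℕ → Option A} :
    MCR w x ↔
      (∃ u : ℕ → List A, FlattenTo (fun n => hashWord (u n)) w ∧
        FlattenTo (fun n => mirrorPair (u n)) x) ∨
      ∃ (us : List (List A)) (v : ℕ → A), AppendTo (us.flatMap hashWord) (fun i => some (v i)) w ∧
        AppendTo (us.flatMap mirrorPair) (fun i => some (v i)) x := by
  simp only [MCR, List.foldr_append_eq_append, List.append_nil, List.flatMap_def]

theorem exists_mcr (w : ℕ → Option A) : ∃ x, MCR w x := by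
  simp only [mcr_iff]
  rcases flattenTo_hashWord_or_appendTo w with ⟨u, hw⟩ | ⟨us, v, hw⟩
  · obtain ⟨x, hx⟩ := exists_flattenTo fun n => mirrorPair_ne_nil (u n)
    exact ⟨x, Or.inl ⟨u, hw, hx⟩⟩
  · obtain ⟨x, hx⟩ := exists_appendTo (us.flatMap mirrorPair) fun i => some (v i)
    exact ⟨x, Or.inr ⟨us, v, hw, hx⟩⟩

/-- Position `p` of `w` is the first one of a block: it is `0` or follows a `#`. -/
def IsBlockStart (w : ℕ → Option A) (p : ℕ) : Prop :=
  p = 0 ∨ w (p - 1) = none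

theorem isBlockStart_zero (w : ℕ → Option A) : IsBlockStart w 0 := Or.inl rfl

theorem OccursAt.isBlockStart {w : ℕ → Option A} {p : ℕ} {u : List A}
    (h : OccursAt w p (hashWord u)) : IsBlockStart w (p + (hashWord u).length) := by
  rw [length_hashWord]
  exact Or.inr (occursAt_hashWord.1 h).2

end BlockDecomposition

section Transducer

variable {A : Type}

/-- The states of the map-copy-reverse transducer: `copy` moves right and copies the block,
`mirror` moves left and outputs the mirror image, `skip` moves right without output. -/
inductive MCRState
  | copy | mirror | skip

namespace MCRState

instance : Fintype MCRState :=
  ⟨⟨[copy, mirror, skip], by simp⟩, by rintro ⟨⟩ <;> simp⟩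

/-- The state in which the transducer leaves a state on a letter; the outer `none` of the letter
is `⊢`, the inner one is `#`. -/
def next : MCRState → Option (Option A) → Option MCRState
  | copy, some (some _) => some copy
  | mirror, some (some _) => some mirror
  | skip, some (some _) => some skip
  | copy, some none => some mirror
  | mirror, some none => some skip
  | skip, some none => some copy
  | mirror, none => some skip
  | _, none => none

/-- The word output by the transducer in a state on a letter (encoded as in `MCRState.next`). -/
def output : MCRState → Option (Option A) → List (Option A)
  | copy, some a => [a]
  | mirror, some (some a) => [some a]
  | skip, some none => [none]
  | _, _ => []

theorem next_left_inj {p p' q : MCRState} {a : Option (Option A)} (h : p.next a = some q)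
    (h' : p'.next a = some q) : p = p' := by
  rcases a with _ | _ | a <;> cases p <;> cases p' <;> cases q <;> simp_all [next]

end MCRState

open MCRState TwoWayTrans

/-- The map-copy-reverse transducer; it has no coloring functions, so every run reading the whole
word is accepting. -/
def mcrTransducer (A : Type) : TwoWayTrans (Option A) (Option A) where
  Q := MCRState
  finQ := inferInstance
  fwd q := q ≠ mirror
  init := copy
  init_fwd := by simp
  Δ := {t | t.1.next t.2.1 = some t.2.2}
  marker p q h := by cases p <;> cases q <;> simp_all [next]
  CIdx := Empty
  finC := inferInstance
  color := Empty.elim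
  out t := t.1.output t.2.1

namespace mcrTransducer

instance : IsEmpty (mcrTransducer A).CIdx := inferInstanceAs (IsEmpty Empty)

theorem reversible (A : Type) : Reversible (mcrTransducer A).toTwoWayAut :=
  ⟨fun _ _ _ _ h h' => Option.some_injective _ (Eq.trans (Eq.symm h) h'),
    fun _ _ _ _ h h' => next_left_inj h h'⟩

variable {w : ℕ → Option A} {p : ℕ} {a : A} {u : List A}

theorem reaches_of_stepVia {q q' : MCRState} {i j : ℕ} {a : Option (Option A)}
    (h : StepVia (mcrTransducer A).toTwoWayAut w (q, i) (q, a, q') (q', j)) :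
    (mcrTransducer A).Reaches w (q, i) (q.output a) (q', j) :=
  .of_stepVia h

theorem reaches_copy_letter (h : w p = some a) :
    (mcrTransducer A).Reaches w (copy, p) [some a] (copy, p + 1) :=
  reaches_of_stepVia (a := some (some a)) ⟨rfl, rfl, rfl, by simp [mcrTransducer, h]⟩

theorem reaches_copy_hash (h : w p = none) :
    (mcrTransducer A).Reaches w (copy, p) [none] (mirror, p) :=
  reaches_of_stepVia (a := some none) ⟨rfl, rfl, rfl, by simp [mcrTransducer, h]⟩

theorem reaches_mirror_letter (h : w p = some a) :
    (mcrTransducer A).Reaches w (mirror, p + 1) [some a] (mirror, p) :=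
  reaches_of_stepVia (a := some (some a)) ⟨rfl, rfl, rfl, by simp [mcrTransducer, h]⟩

theorem reaches_mirror_blockStart (h : IsBlockStart w p) :
    (mcrTransducer A).Reaches w (mirror, p) [] (skip, p) := by
  rcases Nat.eq_zero_or_pos p with rfl | hp
  · exact reaches_of_stepVia (a := none) ⟨rfl, rfl, rfl, by simp [mcrTransducer]⟩
  · exact reaches_of_stepVia (a := some none)
      ⟨rfl, rfl, rfl, by simp [mcrTransducer, hp, h.resolve_left hp.ne']⟩

theorem reaches_skip_letter (h : w p = some a) :
    (mcrTransducer A).Reaches w (skip, p) [] (skip, p + 1) :=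
  reaches_of_stepVia (a := some (some a)) ⟨rfl, rfl, rfl, by simp [mcrTransducer, h]⟩

theorem reaches_skip_hash (h : w p = none) :
    (mcrTransducer A).Reaches w (skip, p) [none] (copy, p + 1) :=
  reaches_of_stepVia (a := some none) ⟨rfl, rfl, rfl, by simp [mcrTransducer, h]⟩

theorem reaches_copy_map_some (h : OccursAt w p (u.map some)) :
    (mcrTransducer A).Reaches w (copy, p) (u.map some) (copy, p + u.length) := by
  have h_letter : ∀ b ∈ u.map some, ∀ i, w i = b →
      (mcrTransducer A).Reaches w (copy, i) [b] (copy, i + 1) := by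
    simpa using fun _ _ _ => reaches_copy_letter
  simpa using Reaches.sweep_right h_letter h

theorem reaches_mirror_map_some (h : OccursAt w p (u.map some)) :
    (mcrTransducer A).Reaches w (mirror, p + u.length) (u.reverse.map some) (mirror, p) := by
  have h_letter : ∀ b ∈ u.map some, ∀ i, w i = b →
      (mcrTransducer A).Reaches w (mirror, i + 1) [b] (mirror, i) := by
    simpa using fun _ _ _ => reaches_mirror_letter
  simpa using Reaches.sweep_left h_letter h

theorem reaches_skip_map_some (h : OccursAt w p (u.map some)) :
    (mcrTransducer A).Reaches w (skip, p) [] (skip, p + u.length) := by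
  have h_letter : ∀ b ∈ u.map some, ∀ i, w i = b →
      (mcrTransducer A).Reaches w (skip, i) [] (skip, i + 1) := by
    simpa using fun _ _ _ => reaches_skip_letter
  have h_nil : (u.map some).flatMap (fun _ => ([] : List (Option A))) = [] :=
    List.flatMap_eq_nil_iff.2 fun _ _ => rfl
  simpa [h_nil] using Reaches.sweep_right h_letter h

theorem reaches_mirrorPair (hp : IsBlockStart w p) (h : OccursAt w p (hashWord u)) :
    (mcrTransducer A).Reaches w (copy, p) (mirrorPair u) (copy, p + (hashWord u).length) := by
  obtain ⟨h_block, h_hash⟩ := occursAt_hashWord.1 h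
  have h_copy := (reaches_copy_map_some h_block).trans (reaches_copy_hash h_hash)
  have h_mirror := (reaches_mirror_map_some h_block).trans (reaches_mirror_blockStart hp)
  have h_skip := (reaches_skip_map_some h_block).trans (reaches_skip_hash h_hash)
  simpa [mirrorPair, hashWord, add_assoc] using (h_copy.trans h_mirror).trans h_skip

theorem reaches_flatMap_mirrorPair {us : List (List A)} (hp : IsBlockStart w p)
    (h : OccursAt w p (us.flatMap hashWord)) :
    (mcrTransducer A).Reaches w (copy, p) (us.flatMap mirrorPair)
      (copy, p + (us.flatMap hashWord).length) := by
  induction us generalizing p with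
  | nil => exact .refl _
  | cons u us ih =>
    rw [List.flatMap_cons, occursAt_append] at h
    rw [List.flatMap_cons, List.flatMap_cons, List.length_append, ← add_assoc]
    exact (reaches_mirrorPair hp h.1).trans (ih h.1.isBlockStart h.2)

theorem realizes_of_flattenTo {u : ℕ → List A} {x : ℕ → Option A}
    (hw : FlattenTo (fun n => hashWord (u n)) w) (hx : FlattenTo (fun n => mirrorPair (u n)) x) :
    (mcrTransducer A).Realizes w x := by
  refine realizes_of_forall_reaches (reversible A).1 fun m => ?_
  have h_occurs := isPrefixOf_iff_occursAt_zero.1 (hw.1 m)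
  rw [prefixCat_comp_eq_flatMap] at h_occurs
  refine ⟨_, _, reaches_flatMap_mirrorPair (isBlockStart_zero w) h_occurs, ?_, ?_, ?_⟩ <;>
    rw [← prefixCat_comp_eq_flatMap]
  · rw [zero_add]
    exact le_length_prefixCat (fun n => hashWord_ne_nil (u n)) m
  · exact le_length_prefixCat (fun n => mirrorPair_ne_nil (u n)) m
  · exact hx.1 m

theorem realizes_of_appendTo {us : List (List A)} {v : ℕ → A} {x : ℕ → Option A}
    (hw : AppendTo (us.flatMap hashWord) (fun i => some (v i)) w)
    (hx : AppendTo (us.flatMap mirrorPair) (fun i => some (v i)) x) :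
    (mcrTransducer A).Realizes w x := by
  refine realizes_of_forall_reaches (reversible A).1 fun m => ?_
  have h_tail {y : ℕ → Option A} {k : ℕ} (hy : ∀ i, y (k + i) = some (v i)) :
      OccursAt y k (((List.range m).map v).map some) := by
    simpa [hy, Function.comp_def] using occursAt_map_range y k m
  have h_blocks := reaches_flatMap_mirrorPair (isBlockStart_zero w)
    (isPrefixOf_iff_occursAt_zero.1 hw.1)
  rw [zero_add] at h_blocks
  refine ⟨_, _, h_blocks.trans (reaches_copy_map_some (h_tail hw.2)), ?_, ?_, ?_⟩
  · simp
  · simp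
  · rw [isPrefixOf_iff_occursAt_zero, occursAt_append, zero_add]
    exact ⟨isPrefixOf_iff_occursAt_zero.1 hx.1, h_tail hx.2⟩

theorem realizes_of_mcr {x : ℕ → Option A} (h : MCR w x) : (mcrTransducer A).Realizes w x := by
  rcases mcr_iff.1 h with ⟨u, hw, hx⟩ | ⟨us, v, hw, hx⟩
  · exact realizes_of_flattenTo hw hx
  · exact realizes_of_appendTo hw hx

theorem realizes_iff {x : ℕ → Option A} :
    (mcrTransducer A).Realizes w x ↔ MCR w x := by
  refine ⟨fun hx => ?_, realizes_of_mcr⟩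
  obtain ⟨y, hy⟩ := exists_mcr w
  rwa [hx.unique (reversible A).1 (realizes_of_mcr hy)]

end mcrTransducer

end Transducer

theorem mcr_realized_by_rbt_general (A : Type) :
    ∃ T : TwoWayTrans (Option A) (Option A),
      Reversible T.toTwoWayAut ∧ ∀ w x, T.Realizes w x ↔ MCR w x :=
  ⟨mcrTransducer A, mcrTransducer.reversible A, fun _ _ => mcrTransducer.realizes_iff⟩

/-- The map-copy-reverse function is realized by a reversible two-way
parity transducer. -/
theorem mcr_realized_by_rbt (A : Type) [Fintype A] :
    ∃ T : TwoWayTrans (Option A) (Option A),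
      Reversible T.toTwoWayAut ∧
      (∀ w x, T.Realizes w x ↔ MCR w x) :=
  mcr_realized_by_rbt_general A

end Paper
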